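/- Let G be a k-connected (k ≥ 1) finite simple graph with n ≥ 9 vertices, e edges, minimum degree δ ≥ 1, and maximum degree Δ. If Inv(G) ≤ (n − k − 2)/Δ + (1/((k + 2)·Δ³))·( 2(k + 2)·((k + 2)·δ² + e²/(n − k − 2)) − e² − 2(k + 2)·(n − k − 2)·Δ² ), then G is traceable. -/

import Mathlib

open Finset

/-- The first Zagreb index of a graph: the sum of the squares of the vertex degrees. -/
def zagreb1 {V : Type*} [Fintype V] (G : SimpleGraph V) [DecidableRel G.Adj] : ℝ :=
  ∑ u, (G.degree u : ℝ) ^ 2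

/-- The forgotten topological index of a graph: the sum of the cubes of the vertex degrees. -/
def forgottenIndex {V : Type*} [Fintype V] (G : SimpleGraph V) [DecidableRel G.Adj] : ℝ :=
  ∑ u, (G.degree u : ℝ) ^ 3

/-- The inverse degree of a graph: the sum of the reciprocals of the vertex degrees. -/
noncomputable def invDegree {V : Type*} [Fintype V] (G : SimpleGraph V) [DecidableRel G.Adj] : ℝ :=
  ∑ u, 1 / (G.degree u : ℝ)

/-- The independence number of a graph: the largest cardinality of a set of pairwise
nonadjacent vertices. -/
noncomputable def indepNum {V : Type*} [Fintype V] (G : SimpleGraph V) : ℕ :=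
  sSup {k | ∃ s : Finset V, s.card = k ∧ ∀ u ∈ s, ∀ v ∈ s, ¬ G.Adj u v}

/-- A graph is a regular balanced bipartite graph if its vertices can be partitioned into
two parts of equal size with every edge joining the two parts, and all vertices have the
same degree. -/
def IsRegularBalancedBipartite {V : Type*} [Fintype V] (G : SimpleGraph V) [DecidableRel G.Adj] : Prop :=
  ∃ (A : Finset V) (r : ℕ), 2 * A.card = Fintype.card V ∧
    (∀ u v, G.Adj u v → (u ∈ A ↔ v ∉ A)) ∧ G.IsRegularOfDegree r

/-- A graph is `k`-connected if it has more than `k` vertices and removing any set of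
fewer than `k` vertices leaves a connected graph. -/
def IsKConnected {V : Type*} [Fintype V] (G : SimpleGraph V) (k : ℕ) : Prop :=
  k < Fintype.card V ∧
    ∀ S : Finset V, S.card < k → (G.induce (↑S : Set V)ᶜ).Connected

/-- A graph is traceable if it has a Hamiltonian path. -/
def IsTraceable {V : Type*} [DecidableEq V] (G : SimpleGraph V) : Prop :=
  ∃ (u v : V) (p : G.Walk u v), p.IsHamiltonian

/-!
Let `P` be a longest path, with first vertex `x`, and suppose that it misses a vertex `h`. By
`k`-connectedness the component of `h` in `G - P` is adjacent to at least `k` vertices of `P`. The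
vertices following these on `P`, together with `h` and `x`, form an independent set, since an edge
inside it would allow `P` to be rerouted into a longer path. Hence there is an independent set `I`
of exactly `k + 2` vertices containing `h` and `x`.

Counting edges at `I` and at its complement gives `|I| δ ≤ e ≤ (n - |I|) Δ`, while `Inv(G) ≥ n / Δ`.
Under the assumed bound on `Inv(G)` all of these are equalities, so `G` is bipartite with sides `I`
and `Iᶜ` of equal size.

A connected graph has only one bipartition, so `I` is the side of `x`, whatever missed vertex `h` we
started from: every missed vertex lies in `I`. As `P` starts in `I` and alternates between the
sides, `Iᶜ` has at most as many vertices as `I` has on `P`, which is fewer than `|I|`: a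
contradiction.
-/

/-- A path in `G`, encoded as its list of vertices, that no path of `G` exceeds in length. -/
structure IsLongestPath {V : Type*} (G : SimpleGraph V) (P : List V) : Prop where
  isChain : P.IsChain G.Adj
  nodup : P.Nodup
  length_le : ∀ Q : List V, Q.IsChain G.Adj → Q.Nodup → Q.length ≤ P.length

/-- The vertices `h` and `c` are joined by a walk avoiding `P`, that is, they lie in the same
component of `G - P`. -/
def OffReachable {V : Type*} (G : SimpleGraph V) (P : List V) (h c : V) : Prop :=
  ∃ w : G.Walk h c, w.support.Disjoint P

/-- The vertices of `P` adjacent to the component of `h` in `G - P`. -/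
def attachments {V : Type*} (G : SimpleGraph V) (P : List V) (h : V) : Set V :=
  {y | y ∈ P ∧ ∃ c, OffReachable G P h c ∧ G.Adj y c}

/-- The vertices immediately following on `P` those adjacent to the component of `h` in `G - P`. -/
def attachmentSuccessors {V : Type*} (G : SimpleGraph V) (P : List V) (h : V) : Set V :=
  {z | ∃ y ∈ attachments G P h, [y, z] <:+: P}

section List

variable {α : Type*} {l : List α} {a b a' b' : α}

lemma exists_pair_infix_of_getLast?_ne (ha : a ∈ l) (hlast : l.getLast? ≠ some a) :
    ∃ b, [a, b] <:+: l := by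
  obtain ⟨s, _ | ⟨b, t⟩, rfl⟩ := List.append_of_mem ha
  · simp at hlast
  · exact ⟨b, s, t, by simp⟩

lemma exists_pair_infix_of_head?_ne (hb : b ∈ l) (hhead : l.head? ≠ some b) :
    ∃ a, [a, b] <:+: l := by
  obtain ⟨a, ha⟩ := exists_pair_infix_of_getLast?_ne (List.mem_reverse.2 hb)
    (by rwa [List.getLast?_reverse])
  exact ⟨a, by simpa using List.reverse_infix.2 ha⟩

lemma head?_ne_of_pair_infix (hl : l.Nodup) (h : [a, b] <:+: l) : l.head? ≠ some b := by
  obtain ⟨_ | ⟨c, s⟩, t, rfl⟩ := h <;> grind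

lemma exists_append_of_pair_infix (h : [a, b] <:+: l) (h' : [a', b'] <:+: l) (hb : b ≠ b')
    (hba' : b ≠ a') (hab' : a ≠ b') :
    (∃ s m t, l = s ++ a :: b :: (m ++ a' :: b' :: t)) ∨
      ∃ s m t, l = s ++ a' :: b' :: (m ++ a :: b :: t) := by
  obtain ⟨s, t, rfl⟩ := h
  obtain ⟨s', t', h'⟩ := h'
  simp only [List.append_assoc, List.cons_append, List.nil_append, List.append_eq_append_iff,
    List.cons_eq_append_iff] at h' ⊢
  grind

lemma eq_of_pair_infix_right (hl : l.Nodup) (h : [a, b] <:+: l)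
    (h' : [a', b] <:+: l) : a = a' := by
  obtain ⟨s, t, rfl⟩ := h
  obtain ⟨s', t', h'⟩ := h'
  simp only [List.append_assoc, List.cons_append, List.nil_append, List.append_eq_append_iff,
    List.cons_eq_append_iff] at h' hl ⊢
  grind

lemma eq_of_pair_infix_left (hl : l.Nodup) (h : [a, b] <:+: l)
    (h' : [a, b'] <:+: l) : b = b' :=
  eq_of_pair_infix_right (List.nodup_reverse.2 hl) (by simpa using List.reverse_infix.2 h)
    (by simpa using List.reverse_infix.2 h')

end List

lemma isChain_adj_reverse {V : Type*} {G : SimpleGraph V} {l : List V} :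
    l.reverse.IsChain G.Adj ↔ l.IsChain G.Adj := by
  simp only [List.isChain_reverse, G.adj_comm]

lemma exists_isLongestPath {V : Type*} [Finite V] (G : SimpleGraph V) :
    ∃ P, IsLongestPath G P := by
  have := Fintype.ofFinite V
  have hfin : {Q : List V | Q.Nodup}.Finite :=
    (List.finite_length_le V (Fintype.card V)).subset fun _ hQ ↦ hQ.length_le_card
  obtain ⟨P, ⟨hchain, hnodup⟩, hmax⟩ :=
    Set.exists_max_image {Q : List V | Q.IsChain G.Adj ∧ Q.Nodup} List.length
      (hfin.subset fun _ hQ ↦ hQ.2) ⟨[], by simp⟩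
  exact ⟨P, hchain, hnodup, fun Q hQ hQn ↦ hmax Q ⟨hQ, hQn⟩⟩

lemma isTraceable_of_forall_mem {V : Type*} [DecidableEq V] [Nonempty V] {G : SimpleGraph V}
    {P : List V} (hchain : P.IsChain G.Adj) (hnodup : P.Nodup) (hmem : ∀ v, v ∈ P) :
    IsTraceable G := by
  have hne : P ≠ [] := List.ne_nil_of_mem (hmem (Classical.arbitrary V))
  refine ⟨_, _, SimpleGraph.Walk.ofSupport P hne hchain, fun v ↦ ?_⟩
  rw [SimpleGraph.Walk.support_ofSupport]
  exact List.count_eq_one_of_mem hnodup (hmem v)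

section Attachments

variable {V : Type*} {G : SimpleGraph V} {P : List V} {h c d y z x : V}

lemma OffReachable.refl (hh : h ∉ P) : OffReachable G P h h :=
  ⟨.nil, by simpa using hh⟩

lemma OffReachable.notMem (hc : OffReachable G P h c) : c ∉ P :=
  hc.choose_spec hc.choose.end_mem_support

lemma OffReachable.trans_adj (hc : OffReachable G P h c) (hadj : G.Adj c d) (hd : d ∉ P) :
    OffReachable G P h d := by
  obtain ⟨w, hw⟩ := hc
  refine ⟨w.concat hadj, ?_⟩
  simpa [SimpleGraph.Walk.support_concat] using ⟨hw, hd⟩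

lemma exists_detour (hy : y ∈ attachments G P h) (hz : z ∈ attachments G P h) :
    ∃ q : List V, q ≠ [] ∧ q.Nodup ∧ q.Disjoint P ∧ (y :: (q ++ [z])).IsChain G.Adj := by
  classical
  obtain ⟨-, c, ⟨w, hw⟩, hyc⟩ := hy
  obtain ⟨-, d, ⟨w', hw'⟩, hzd⟩ := hz
  let p := (w.reverse.append w').toPath
  refine ⟨p.1.support, p.1.support_ne_nil, p.2.support_nodup, fun v hv ↦ ?_, ?_⟩
  · have hv' := SimpleGraph.Walk.support_bypass_subset_support _ hv
    rw [SimpleGraph.Walk.mem_support_append_iff, SimpleGraph.Walk.support_reverse,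
      List.mem_reverse] at hv'
    exact hv'.elim (@hw v) (@hw' v)
  · simpa [SimpleGraph.Walk.support_concat] using
      (SimpleGraph.Walk.cons hyc (p.1.concat hzd.symm)).isChain_adj_support

lemma le_ncard_attachments [Fintype V] {k : ℕ} (hconn : IsKConnected G k) (hh : h ∉ P)
    (hx : x ∈ P) (hxh : x ∉ attachments G P h) : k ≤ (attachments G P h).ncard := by
  classical
  by_contra! hlt
  rw [Set.ncard_eq_toFinset_card'] at hlt
  have hhh : h ∉ attachments G P h := fun hmem ↦ hh hmem.1
  obtain ⟨w⟩ := (hconn.2 _ hlt).preconnected ⟨h, by simpa using hhh⟩ ⟨x, by simpa using hxh⟩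
  obtain ⟨e, -, hfst, hsnd⟩ := w.exists_boundary_dart {v | OffReachable G P h v} (.refl hh)
    fun hmem ↦ hmem.notMem hx
  have hadj : G.Adj e.fst e.snd := e.adj
  have hsndP : (e.snd : V) ∈ P := by_contra fun hmem ↦ hsnd (hfst.trans_adj hadj hmem)
  exact e.snd.2 (by simpa using ⟨hsndP, e.fst, hfst, hadj.symm⟩)

end Attachments

namespace IsLongestPath

variable {V : Type*} {G : SimpleGraph V} {P : List V} {x h c y z z' : V}

lemma not_isChain_of_perm (hP : IsLongestPath G P) {Q q : List V} (hq : q ≠ [])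
    (hnodup : q.Nodup) (hdisj : q.Disjoint P) (hperm : Q.Perm (q ++ P)) :
    ¬ Q.IsChain G.Adj := by
  intro hQ
  have hQnodup := hperm.nodup_iff.2 (List.nodup_append'.2 ⟨hnodup, hP.nodup, hdisj⟩)
  have hle := hP.length_le Q hQ hQnodup
  have hpos := List.length_pos_iff.2 hq
  rw [hperm.length_eq, List.length_append] at hle
  omega

lemma not_isChain_of_perm_cons (hP : IsLongestPath G P) {Q : List V} (hc : c ∉ P)
    (hperm : Q.Perm (c :: P)) : ¬ Q.IsChain G.Adj :=
  hP.not_isChain_of_perm (q := [c]) (by simp) (by simp) (by simpa using hc) hperm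

lemma not_adj_head (hP : IsLongestPath G P) (hx : P.head? = some x) (hc : c ∉ P) :
    ¬ G.Adj x c := fun hadj ↦
  hP.not_isChain_of_perm_cons hc (.refl _) <|
    hP.isChain.cons fun v hv ↦ by
      obtain rfl := Option.mem_unique hv hx
      exact hadj.symm

lemma not_adj_getLast (hP : IsLongestPath G P) (hx : P.getLast? = some x) (hc : c ∉ P) :
    ¬ G.Adj x c := fun hadj ↦
  hP.not_isChain_of_perm_cons hc List.perm_append_comm <|
    hP.isChain.append (.singleton c) fun v hv u hu ↦ by
      obtain rfl := Option.mem_unique hv hx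
      obtain rfl : c = u := by simpa using hu
      exact hadj

lemma head_notMem_attachments (hP : IsLongestPath G P) (hx : P.head? = some x) :
    x ∉ attachments G P h := by
  rintro ⟨-, c, hc, hadj⟩
  exact hP.not_adj_head hx hc.notMem hadj

lemma exists_successor_of_mem_attachments (hP : IsLongestPath G P) (hy : y ∈ attachments G P h) :
    ∃ z, [y, z] <:+: P := by
  obtain ⟨hyP, c, hc, hadj⟩ := hy
  exact exists_pair_infix_of_getLast?_ne hyP fun hlast ↦ hP.not_adj_getLast hlast hc.notMem hadj

lemma disjoint_attachmentSuccessors (hP : IsLongestPath G P) :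
    Disjoint (attachmentSuccessors G P h) (attachments G P h) := by
  rw [Set.disjoint_left]
  rintro z ⟨y, hy, s, t, rfl⟩ hz
  obtain ⟨q, hq, hnodup, hdisj, hchain⟩ := exists_detour hy hz
  refine hP.not_isChain_of_perm (Q := s ++ y :: (q ++ z :: t)) hq hnodup hdisj ?_ ?_
  · classical grind
  · have hPchain := hP.isChain
    rw [List.append_assoc, List.cons_append, List.singleton_append,
      List.isChain_append_cons_cons] at hPchain
    rw [List.isChain_split, List.isChain_cons_split]
    exact ⟨hPchain.1, hchain, hPchain.2.2⟩

lemma not_adj_head_attachmentSuccessor (hP : IsLongestPath G P) (hx : P.head? = some x)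
    (hz : z ∈ attachmentSuccessors G P h) : ¬ G.Adj x z := by
  obtain ⟨y, ⟨-, c, hc, hyc⟩, s, t, rfl⟩ := hz
  intro hadj
  refine hP.not_isChain_of_perm_cons (Q := c :: ((s ++ [y]).reverse ++ z :: t)) hc.notMem ?_ ?_
  · classical grind
  · have hPchain := hP.isChain
    rw [List.append_assoc, List.cons_append, List.singleton_append,
      List.isChain_append_cons_cons] at hPchain
    refine .cons ((isChain_adj_reverse.2 hPchain.1).append hPchain.2.2 ?_) ?_
    · grind
    · simpa using hyc.symm

lemma not_adj_of_eq_append (hP : IsLongestPath G P) {s m t : List V} {y' : V}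
    (hPeq : P = s ++ y :: z :: (m ++ y' :: z' :: t)) (hy : y ∈ attachments G P h)
    (hy' : y' ∈ attachments G P h) : ¬ G.Adj z z' := by
  intro hadj
  obtain ⟨q, hq, hnodup, hdisj, hchain⟩ := exists_detour hy hy'
  refine hP.not_isChain_of_perm (Q := s ++ y :: (q ++ y' :: (m.reverse ++ z :: z' :: t)))
    hq hnodup hdisj ?_ ?_
  · subst hPeq
    classical grind
  · have hPchain := hP.isChain
    rw [hPeq, List.isChain_append_cons_cons, List.isChain_cons_append_cons_cons] at hPchain
    obtain ⟨hs, -, hm, -, ht⟩ := hPchain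
    rw [List.isChain_split, List.isChain_cons_split, List.isChain_cons_append_cons_cons]
    exact ⟨hs, hchain, by simpa using isChain_adj_reverse.2 hm, hadj, ht⟩

lemma isIndepSet_attachmentSuccessors (hP : IsLongestPath G P) :
    G.IsIndepSet (attachmentSuccessors G P h) := by
  intro z hz z' hz' hne hadj
  have hne_of_mem : ∀ {u v}, u ∈ attachmentSuccessors G P h → v ∈ attachments G P h → u ≠ v :=
    fun hu hv ↦ hP.disjoint_attachmentSuccessors.ne_of_mem hu hv
  obtain ⟨y, hy, hyz⟩ := id hz
  obtain ⟨y', hy', hyz'⟩ := id hz'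
  rcases exists_append_of_pair_infix hyz hyz' hne (hne_of_mem hz hy') (hne_of_mem hz' hy).symm with
    ⟨s, m, t, hPeq⟩ | ⟨s, m, t, hPeq⟩
  · exact hP.not_adj_of_eq_append hPeq hy hy' hadj
  · exact hP.not_adj_of_eq_append hPeq hy' hy hadj.symm

lemma isIndepSet_insert_insert_attachmentSuccessors (hP : IsLongestPath G P)
    (hx : P.head? = some x) (hh : h ∉ P) :
    G.IsIndepSet (insert h (insert x (attachmentSuccessors G P h))) := by
  have hhx : ¬ G.Adj h x := fun hadj ↦ hP.not_adj_head hx hh hadj.symm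
  have hhz : ∀ z ∈ attachmentSuccessors G P h, ¬ G.Adj h z := by
    intro z hz hadj
    obtain ⟨y, -, hyz⟩ := id hz
    exact hP.disjoint_attachmentSuccessors.notMem_of_mem_left hz
      ⟨hyz.subset (by simp), h, .refl hh, hadj.symm⟩
  have : Std.Symm fun u v ↦ ¬ G.Adj u v := ⟨fun _ _ hnot hadj ↦ hnot hadj.symm⟩
  refine (hP.isIndepSet_attachmentSuccessors.insert_of_symm fun z hz _ ↦
    hP.not_adj_head_attachmentSuccessor hx hz).insert_of_symm ?_
  rintro v (rfl | hv) -
  exacts [hhx, hhz v hv]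

lemma ncard_attachments_le [Finite V] (hP : IsLongestPath G P) :
    (attachments G P h).ncard ≤ (attachmentSuccessors G P h).ncard := by
  classical
  have := Fintype.ofFinite V
  rw [Set.ncard_eq_toFinset_card', Set.ncard_eq_toFinset_card']
  refine card_le_card_of_forall_subsingleton (fun y z ↦ [y, z] <:+: P) ?_ ?_
  · intro y hy
    rw [Set.mem_toFinset] at hy
    obtain ⟨z, hyz⟩ := hP.exists_successor_of_mem_attachments hy
    exact ⟨z, Set.mem_toFinset.2 ⟨y, hy, hyz⟩, hyz⟩
  · exact fun z _ y hy y' hy' ↦ eq_of_pair_infix_right hP.nodup hy.2 hy'.2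

lemma exists_isNIndepSet [Fintype V] (hP : IsLongestPath G P) {k : ℕ} (hconn : IsKConnected G k)
    (hx : P.head? = some x) (hh : h ∉ P) :
    ∃ I : Finset V, G.IsNIndepSet (k + 2) I ∧ h ∈ I ∧ x ∈ I := by
  classical
  have hxP : x ∈ P := List.mem_of_mem_head? hx
  let S := (attachmentSuccessors G P h).toFinset
  have hS : k ≤ #S := by
    rw [← Set.ncard_eq_toFinset_card']
    exact (le_ncard_attachments hconn hh hxP (hP.head_notMem_attachments hx)).trans
      hP.ncard_attachments_le
  have hxS : x ∉ S := by
    rw [Set.mem_toFinset]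
    rintro ⟨y, -, hyx⟩
    exact head?_ne_of_pair_infix hP.nodup hyx hx
  have hhS : h ∉ insert x S := by
    rw [mem_insert, Set.mem_toFinset]
    rintro (rfl | ⟨y, -, hyh⟩)
    exacts [hh hxP, hh (hyh.subset (by simp))]
  have hcard : k + 2 ≤ #(insert h (insert x S)) := by
    rw [card_insert_of_notMem hhS, card_insert_of_notMem hxS]
    omega
  obtain ⟨I, hsub, hI, hcardI⟩ := exists_subsuperset_card_eq
    (insert_subset_insert h (singleton_subset_iff.2 (mem_insert_self x S)))
    (card_le_two.trans (Nat.le_add_left 2 k)) hcard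
  refine ⟨I, ⟨?_, hcardI⟩, hsub (by simp), hsub (by simp)⟩
  refine (hP.isIndepSet_insert_insert_attachmentSuccessors hx hh).mono ?_
  simpa [S] using coe_subset.2 hI

end IsLongestPath

section Bipartite

variable {V : Type*} {G : SimpleGraph V}

lemma mem_iff_notMem_of_isBipartiteWith_compl {s : Set V} {u v : V}
    (hs : G.IsBipartiteWith s sᶜ) (hadj : G.Adj u v) : u ∈ s ↔ v ∉ s := by
  rcases hs.mem_of_adj hadj with ⟨hu, hv⟩ | ⟨hu, hv⟩
  · exact iff_of_true hu hv
  · exact iff_of_false hu (not_not_intro hv)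

lemma eq_of_isBipartiteWith_compl_of_mem {s t : Set V} {x : V} (hG : G.Preconnected)
    (hs : G.IsBipartiteWith s sᶜ) (ht : G.IsBipartiteWith t tᶜ) (hxs : x ∈ s) (hxt : x ∈ t) :
    s = t := by
  ext v
  by_contra hv
  obtain ⟨w⟩ := hG x v
  obtain ⟨d, -, hfst, hsnd⟩ :=
    w.exists_boundary_dart {u | u ∈ s ↔ u ∈ t} (iff_of_true hxs hxt) hv
  exact hsnd <| not_iff_not.1 <| (mem_iff_notMem_of_isBipartiteWith_compl hs d.adj).symm.trans <|
    hfst.trans (mem_iff_notMem_of_isBipartiteWith_compl ht d.adj)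

lemma card_compl_le_card_filter_mem [Fintype V] [DecidableEq V] {I : Finset V} {P : List V} {x : V}
    (hI : G.IsBipartiteWith ↑I (↑I)ᶜ) (hchain : P.IsChain G.Adj) (hnodup : P.Nodup)
    (hx : P.head? = some x) (hxI : x ∈ I) (hcover : ∀ v ∉ I, v ∈ P) :
    #Iᶜ ≤ #{u ∈ I | u ∈ P} := by
  refine card_le_card_of_forall_subsingleton (fun v u ↦ [u, v] <:+: P) ?_ ?_
  · intro v hv
    rw [mem_compl] at hv
    obtain ⟨u, huv⟩ := exists_pair_infix_of_head?_ne (hcover v hv) fun hhead ↦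
      hv (Option.some_injective _ (hx.symm.trans hhead) ▸ hxI)
    have hadj : G.Adj u v := List.isChain_pair.1 (hchain.infix huv)
    have hu : u ∈ I := (mem_iff_notMem_of_isBipartiteWith_compl hI hadj).2 hv
    exact ⟨u, mem_filter.2 ⟨hu, huv.subset (by simp)⟩, huv⟩
  · exact fun u _ v hv v' hv' ↦ eq_of_pair_infix_left hnodup hv.2 hv'.2

end Bipartite

section KConnected

variable {V : Type*} [Fintype V] {G : SimpleGraph V} {k : ℕ}

lemma connected_of_isKConnected (hk : 1 ≤ k) (hconn : IsKConnected G k) : G.Connected := by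
  have h := hconn.2 ∅ hk
  rw [coe_empty, Set.compl_empty] at h
  exact (SimpleGraph.induceUnivIso G).connected_iff.1 h

lemma isTraceable_of_forall_isNIndepSet [DecidableEq V] (hG : G.Connected)
    (hconn : IsKConnected G k)
    (hbal : ∀ I : Finset V, G.IsNIndepSet (k + 2) I →
      #I ≤ #Iᶜ ∧ G.IsBipartiteWith ↑I (↑I)ᶜ) : IsTraceable G := by
  have := hG.nonempty
  obtain ⟨P, hP⟩ := exists_isLongestPath G
  by_contra hnot
  obtain ⟨h, hh⟩ : ∃ h, h ∉ P := by
    by_contra! hmem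
    exact hnot (isTraceable_of_forall_mem hP.isChain hP.nodup hmem)
  obtain ⟨x, hx⟩ : ∃ x, P.head? = some x := by
    have hle := hP.length_le [h] (by simp) (by simp)
    exact ⟨_, List.head?_eq_some_head (List.length_pos_iff.1 hle)⟩
  obtain ⟨I, hI, hhI, hxI⟩ := hP.exists_isNIndepSet hconn hx hh
  obtain ⟨hcard, hbip⟩ := hbal I hI
  have hcover : ∀ v ∉ I, v ∈ P := by
    intro v hv
    by_contra hvP
    obtain ⟨J, hJ, hvJ, hxJ⟩ := hP.exists_isNIndepSet hconn hx hvP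
    have hIJ := eq_of_isBipartiteWith_compl_of_mem hG.preconnected hbip (hbal J hJ).2 hxI hxJ
    exact hv (coe_injective hIJ ▸ hvJ)
  have hle : #Iᶜ ≤ #{u ∈ I | u ∈ P} :=
    card_compl_le_card_filter_mem hbip hP.isChain hP.nodup hx hxI hcover
  have hlt : #{u ∈ I | u ∈ P} < #I :=
    card_lt_card (filter_ssubset.2 ⟨h, hhI, hh⟩)
  exact (hcard.trans hle).not_gt hlt

end KConnected

section EdgeCount

variable {V : Type*} [Fintype V] {G : SimpleGraph V} [DecidableRel G.Adj] {I : Finset V}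

lemma card_mul_minDegree_le_sum_degree : #I * G.minDegree ≤ ∑ v ∈ I, G.degree v :=
  card_nsmul_le_sum _ _ _ fun v _ ↦ G.minDegree_le_degree v

lemma card_biUnion_incidenceFinset [DecidableEq V] (hI : G.IsIndepSet (I : Set V)) :
    #(I.biUnion fun v ↦ G.incidenceFinset v) = ∑ v ∈ I, G.degree v := by
  rw [card_biUnion]
  · simp only [SimpleGraph.card_incidenceFinset_eq_degree]
  · intro u hu v hv huv
    refine Finset.disjoint_left.2 fun e he he' ↦ ?_
    rw [SimpleGraph.mem_incidenceFinset] at he he'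
    exact hI hu hv huv (G.adj_of_mem_incidenceSet huv he he')

lemma sum_degree_le_card_edgeFinset (hI : G.IsIndepSet (I : Set V)) :
    ∑ v ∈ I, G.degree v ≤ #G.edgeFinset := by
  classical
  rw [← card_biUnion_incidenceFinset hI]
  exact card_le_card (biUnion_subset.2 fun v _ ↦ G.incidenceFinset_subset v)

lemma isBipartiteWith_compl_of_card_edgeFinset_le (hI : G.IsIndepSet (I : Set V))
    (hle : #G.edgeFinset ≤ ∑ v ∈ I, G.degree v) : G.IsBipartiteWith ↑I (↑I)ᶜ where
  disjoint := disjoint_compl_right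
  mem_of_adj u v hadj := by
    classical
    have hunion : (I.biUnion fun v ↦ G.incidenceFinset v) = G.edgeFinset :=
      eq_of_subset_of_card_le (biUnion_subset.2 fun v _ ↦ G.incidenceFinset_subset v)
        (hle.trans_eq (card_biUnion_incidenceFinset hI).symm)
    have hmem : s(u, v) ∈ I.biUnion fun v ↦ G.incidenceFinset v := by
      rw [hunion, SimpleGraph.mem_edgeFinset]
      exact hadj
    obtain ⟨w, hw, he⟩ := mem_biUnion.1 hmem
    rw [SimpleGraph.mem_incidenceFinset] at he
    rcases Sym2.mem_iff.1 he.2 with rfl | rfl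
    · exact .inl ⟨hw, fun hv ↦ hI hw hv hadj.ne hadj⟩
    · exact .inr ⟨fun hu ↦ hI hu hw hadj.ne hadj, hw⟩

lemma card_edgeFinset_le_card_mul_maxDegree {C : Finset V} (hC : G.IsVertexCover (C : Set V)) :
    #G.edgeFinset ≤ #C * G.maxDegree := by
  classical
  have hsub : G.edgeFinset ⊆ C.biUnion fun v ↦ G.incidenceFinset v := by
    intro e he
    induction e with
    | _ u v =>
      rw [SimpleGraph.mem_edgeFinset] at he
      rw [mem_biUnion]
      rcases hC he with hu | hv
      · exact ⟨u, hu, (G.mem_incidenceFinset u _).2 ⟨he, Sym2.mem_mk_left u v⟩⟩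
      · exact ⟨v, hv, (G.mem_incidenceFinset v _).2 ⟨he, Sym2.mem_mk_right u v⟩⟩
  refine (card_le_card hsub).trans (card_biUnion_le_card_mul _ _ _ fun v _ ↦ ?_)
  rw [SimpleGraph.card_incidenceFinset_eq_degree]
  exact G.degree_le_maxDegree v

end EdgeCount

lemma card_div_maxDegree_le_invDegree {V : Type*} [Fintype V] {G : SimpleGraph V}
    [DecidableRel G.Adj] (hδ : 0 < G.minDegree) :
    (Fintype.card V : ℝ) / G.maxDegree ≤ invDegree G := by
  have hle : ∀ v ∈ univ, 1 / (G.maxDegree : ℝ) ≤ 1 / (G.degree v : ℝ) := fun v _ ↦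
    one_div_le_one_div_of_le (by exact_mod_cast hδ.trans_le (G.minDegree_le_degree v))
      (by exact_mod_cast G.degree_le_maxDegree v)
  simpa [invDegree, div_eq_mul_inv] using card_nsmul_le_sum _ _ _ hle

section InverseDegreeBound

variable {s t δ D e : ℝ}

lemma sq_mul_sq_le_of_inverse_degree_bound (hs : 0 < s) (hD : 0 < D)
    (h : (s + t) / D ≤ t / D +
      (1 / (s * D ^ 3)) * (2 * s * (s * δ ^ 2 + e ^ 2 / t) - e ^ 2 - 2 * s * t * D ^ 2)) :
    s ^ 2 * D ^ 2 ≤ 2 * s * (s * δ ^ 2 + e ^ 2 / t) - e ^ 2 - 2 * s * t * D ^ 2 := by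
  rw [add_div, add_comm, add_le_add_iff_left, one_div_mul_eq_div,
    div_le_div_iff₀ hD (by positivity)] at h
  refine le_of_mul_le_mul_right (h.trans_eq' ?_) hD
  ring

lemma eq_and_eq_mul_of_inverse_degree_bound (hs : 0 < s) (ht : 0 < t) (hδ : 0 < δ) (hδD : δ ≤ D)
    (hse : s * δ ≤ e) (het : e ≤ t * D)
    (h : (s + t) / D ≤ t / D +
      (1 / (s * D ^ 3)) * (2 * s * (s * δ ^ 2 + e ^ 2 / t) - e ^ 2 - 2 * s * t * D ^ 2)) :
    s = t ∧ e = s * δ := by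
  have hD : 0 < D := hδ.trans_le hδD
  have he : 0 < e := (mul_pos hs hδ).trans_le hse
  have hbound := sq_mul_sq_le_of_inverse_degree_bound hs hD h
  have hquot : s * (e ^ 2 / t) ≤ s * (t * D ^ 2) := by
    gcongr
    rw [div_le_iff₀ ht]
    calc e ^ 2 ≤ (t * D) ^ 2 := by gcongr
      _ = t * D ^ 2 * t := by ring
  have hse_sq : (s * δ) ^ 2 ≤ e ^ 2 := by gcongr
  have hDδ : D ≤ δ := by
    -- In `hbound`, replace `e ^ 2 / t` by its bound `t * D ^ 2` and `-e ^ 2` by `-(s * δ) ^ 2`.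
    have hsq : (s * D) ^ 2 ≤ (s * δ) ^ 2 := by linarith
    exact le_of_mul_le_mul_left (pow_le_pow_iff_left₀ (by positivity) (by positivity)
      two_ne_zero |>.1 hsq) hs
  obtain rfl : δ = D := hδD.antisymm hDδ
  have he_eq : e = s * δ := by
    refine (abs_le_of_sq_le_sq' ?_ (by positivity)).2.antisymm hse
    linarith
  refine ⟨le_antisymm ?_ ?_, he_eq⟩
  · exact le_of_mul_le_mul_right (he_eq ▸ het) hD
  · have he_sq : e ^ 2 = (s * δ) ^ 2 := by rw [he_eq]
    have hquot_ge : t * δ ^ 2 ≤ e ^ 2 / t := by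
      refine le_of_mul_le_mul_left ?_ hs
      linarith
    have hsq : (t * δ) ^ 2 ≤ (s * δ) ^ 2 := by
      rw [le_div_iff₀ ht, he_sq] at hquot_ge
      linarith
    exact le_of_mul_le_mul_right (pow_le_pow_iff_left₀ (by positivity) (by positivity)
      two_ne_zero |>.1 hsq) hD

end InverseDegreeBound

lemma card_eq_card_compl_and_isBipartiteWith_of_invDegree_le {V : Type*} [Fintype V]
    [DecidableEq V] {G : SimpleGraph V} [DecidableRel G.Adj] {I : Finset V}
    (hδ : 0 < G.minDegree) (hI : G.IsIndepSet (I : Set V)) (hne : I.Nonempty)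
    (h : invDegree G ≤ #Iᶜ / (G.maxDegree : ℝ) + (1 / (#I * (G.maxDegree : ℝ) ^ 3)) *
      (2 * #I * (#I * (G.minDegree : ℝ) ^ 2 + (#G.edgeFinset : ℝ) ^ 2 / #Iᶜ)
        - (#G.edgeFinset : ℝ) ^ 2 - 2 * #I * #Iᶜ * (G.maxDegree : ℝ) ^ 2)) :
    #I = #Iᶜ ∧ G.IsBipartiteWith ↑I (↑I)ᶜ := by
  have hIe : #I * G.minDegree ≤ #G.edgeFinset :=
    card_mul_minDegree_le_sum_degree.trans (sum_degree_le_card_edgeFinset hI)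
  have heIc : #G.edgeFinset ≤ #Iᶜ * G.maxDegree :=
    card_edgeFinset_le_card_mul_maxDegree (by simpa using hI)
  have hI_pos : 0 < #I := hne.card_pos
  have hIc_pos : 0 < #Iᶜ :=
    Nat.pos_of_mul_pos_right (((Nat.mul_pos hI_pos hδ).trans_le hIe).trans_le heIc)
  have hδΔ : G.minDegree ≤ G.maxDegree := G.minDegree_le_maxDegree
  have hbound := (card_div_maxDegree_le_invDegree hδ).trans h
  rw [← card_add_card_compl I, Nat.cast_add] at hbound
  obtain ⟨hcard, hedges⟩ := eq_and_eq_mul_of_inverse_degree_bound (mod_cast hI_pos)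
    (mod_cast hIc_pos) (mod_cast hδ) (mod_cast hδΔ) (mod_cast hIe) (mod_cast heIc) hbound
  have heI : #G.edgeFinset = #I * G.minDegree := mod_cast hedges
  exact ⟨mod_cast hcard, isBipartiteWith_compl_of_card_edgeFinset_le hI
    (heI.trans_le card_mul_minDegree_le_sum_degree)⟩

theorem stmt15_general {V : Type*} [Fintype V] [DecidableEq V] (G : SimpleGraph V)
    [DecidableRel G.Adj] (k : ℕ) (hk : 1 ≤ k) (hconn : IsKConnected G k)
    (h : invDegree G ≤ ((Fintype.card V : ℝ) - k - 2) / (G.maxDegree : ℝ)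
        + (1 / (((k : ℝ) + 2) * (G.maxDegree : ℝ) ^ 3)) *
          (2 * ((k : ℝ) + 2) * (((k : ℝ) + 2) * (G.minDegree : ℝ) ^ 2
              + (G.edgeFinset.card : ℝ) ^ 2 / ((Fintype.card V : ℝ) - k - 2))
            - (G.edgeFinset.card : ℝ) ^ 2
            - 2 * ((k : ℝ) + 2) * ((Fintype.card V : ℝ) - k - 2) * (G.maxDegree : ℝ) ^ 2)) :
    IsTraceable G := by
  have hG : G.Connected := connected_of_isKConnected hk hconn
  have : Nontrivial V := Fintype.one_lt_card_iff_nontrivial.1 (hk.trans_lt hconn.1)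
  have hδ : 0 < G.minDegree := hG.preconnected.minDegree_pos_of_nontrivial
  refine isTraceable_of_forall_isNIndepSet hG hconn fun I hI ↦ ?_
  have hcard : (#I : ℝ) = k + 2 := mod_cast hI.card_eq
  have hcard_compl : (#Iᶜ : ℝ) = Fintype.card V - k - 2 := by
    rw [← card_add_card_compl I, Nat.cast_add, hcard]
    ring
  rw [← hcard_compl, ← hcard] at h
  have hne : I.Nonempty := card_pos.1 (hI.card_eq ▸ Nat.succ_pos _)
  exact (card_eq_card_compl_and_isBipartiteWith_of_invDegree_le hδ hI.isIndepSet hne h).imp_left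
    Eq.le

/-- If `G` is a `k`-connected (`k ≥ 1`) graph with `n ≥ 9` vertices, `e` edges, minimum degree
`δ ≥ 1`, and maximum degree `Δ`, and
`Inv(G) ≤ (n − k − 2)/Δ + (1/((k+2)Δ³))(2(k+2)((k+2)δ² + e²/(n − k − 2)) − e² − 2(k+2)(n − k − 2)Δ²)`,
then `G` is traceable. -/
theorem stmt15 {V : Type*} [Fintype V] [DecidableEq V] (G : SimpleGraph V) [DecidableRel G.Adj]
    (k : ℕ) (hk : 1 ≤ k) (hconn : IsKConnected G k) (hn : 9 ≤ Fintype.card V)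
    (hδ : 1 ≤ G.minDegree)
    (h : invDegree G ≤ ((Fintype.card V : ℝ) - k - 2) / (G.maxDegree : ℝ)
        + (1 / (((k : ℝ) + 2) * (G.maxDegree : ℝ) ^ 3)) *
          (2 * ((k : ℝ) + 2) * (((k : ℝ) + 2) * (G.minDegree : ℝ) ^ 2
              + (G.edgeFinset.card : ℝ) ^ 2 / ((Fintype.card V : ℝ) - k - 2))
            - (G.edgeFinset.card : ℝ) ^ 2
            - 2 * ((k : ℝ) + 2) * ((Fintype.card V : ℝ) - k - 2) * (G.maxDegree : ℝ) ^ 2)) :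
    IsTraceable G :=
  stmt15_general G k hk hconn h
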